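/- Let w, w1, w2 be nonempty words in H^1 and p, q positive integers. Then S(z_p) * S1(z_q)w = S1(z_p z_q)w + S1(z_q)(S(z_p) * w) − S1(z_{p+q})w, and S1(z_p)w1 * S1(z_q)w2 = S1(z_p)(w1 * S1(z_q)w2) + S1(z_q)(S1(z_p)w1 * w2) − S1(z_{p+q})(w1 * w2). -/

import Mathlib

open scoped BigOperators

/-- The two-letter alphabet {x, y}. -/
inductive Letter : Type
  | x : Letter
  | y : Letter
deriving DecidableEq

/-- `H = ℚ⟨x,y⟩`, the noncommutative polynomial ring over ℚ in two
indeterminates, realized as the monoid algebra of the free monoid on `{x,y}`. -/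
abbrev H : Type := MonoidAlgebra ℚ (FreeMonoid Letter)

namespace H

/-- The monomial (word) of `H` corresponding to an element of the free monoid. -/
noncomputable def word (w : FreeMonoid Letter) : H := MonoidAlgebra.single w 1

/-- The generator `x`. -/
noncomputable def X : H := word (FreeMonoid.of Letter.x)

/-- The generator `y`. -/
noncomputable def Y : H := word (FreeMonoid.of Letter.y)

/-- The word `z_k = x^{k-1} y` (for `k ≥ 1`). -/
def zW (k : ℕ) : FreeMonoid Letter :=
  FreeMonoid.ofList (List.replicate (k - 1) Letter.x ++ [Letter.y])

/-- `z_k = x^{k-1} y` as an element of `H`. -/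
noncomputable def z (k : ℕ) : H := word (zW k)

/-- A list `[k₁,…,kₙ]` gives the word `z_{k₁} z_{k₂} ⋯ z_{kₙ}`. -/
def zListW (ks : List ℕ) : FreeMonoid Letter :=
  FreeMonoid.ofList (ks.flatMap fun k => List.replicate (k - 1) Letter.x ++ [Letter.y])

/-- `H¹ = ℚ + Hy` as a ℚ-submodule of `H`. -/
noncomputable def H1 : Submodule ℚ H :=
  LinearMap.range (LinearMap.mulRight ℚ Y) ⊔ Submodule.span ℚ {1}

/-- `H⁰ = ℚ + xHy` as a ℚ-submodule of `H`. -/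
noncomputable def H0 : Submodule ℚ H :=
  LinearMap.range ((LinearMap.mulRight ℚ Y).comp (LinearMap.mulLeft ℚ X)) ⊔
    Submodule.span ℚ {1}

/-- Parse a word of `H¹` into the exponent list of its `z`-decomposition:
`z_{k₁}⋯z_{kₙ} ↦ [k₁,…,kₙ]` (auxiliary accumulator version). -/
def toZAux : List Letter → ℕ → List ℕ
  | [], _ => []
  | Letter.x :: r, n => toZAux r (n + 1)
  | Letter.y :: r, n => (n + 1) :: toZAux r 0

/-- The `z`-decomposition of a word of `H¹`. -/
def toZ (w : FreeMonoid Letter) : List ℕ := toZAux (FreeMonoid.toList w) 0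

/-- The harmonic product on words of `H¹` (via `z`-decompositions):
`1 * w = w * 1 = w` and
`z_k w₁ * z_l w₂ = z_k (w₁ * z_l w₂) + z_l (z_k w₁ * w₂) + z_{k+l} (w₁ * w₂)`. -/
noncomputable def harmW : List ℕ → List ℕ → H
  | [], w => word (zListW w)
  | k :: w1, [] => word (zListW (k :: w1))
  | k :: w1, l :: w2 =>
      z k * harmW w1 (l :: w2) + z l * harmW (k :: w1) w2 + z (k + l) * harmW w1 w2
termination_by w1 w2 => w1.length + w2.length
decreasing_by all_goals simp [Nat.lt_succ_iff] <;> omega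

/-- The n-harmonic product on words of `H¹`:
`1 *̄ w = w *̄ 1 = w` and
`z_k w₁ *̄ z_l w₂ = z_k (w₁ *̄ z_l w₂) + z_l (z_k w₁ *̄ w₂) − z_{k+l} (w₁ *̄ w₂)`. -/
noncomputable def nharmW : List ℕ → List ℕ → H
  | [], w => word (zListW w)
  | k :: w1, [] => word (zListW (k :: w1))
  | k :: w1, l :: w2 =>
      z k * nharmW w1 (l :: w2) + z l * nharmW (k :: w1) w2 - z (k + l) * nharmW w1 w2
termination_by w1 w2 => w1.length + w2.length
decreasing_by all_goals simp [Nat.lt_succ_iff] <;> omega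

/-- The harmonic product `*` on `H¹`, extended ℚ-bilinearly. -/
noncomputable def harm (a b : H) : H :=
  Finsupp.sum a.coeff fun w1 c1 =>
    Finsupp.sum b.coeff fun w2 c2 => (c1 * c2) • harmW (toZ w1) (toZ w2)

/-- The n-harmonic product `*̄` on `H¹`, extended ℚ-bilinearly. -/
noncomputable def nharm (a b : H) : H :=
  Finsupp.sum a.coeff fun w1 c1 =>
    Finsupp.sum b.coeff fun w2 c2 => (c1 * c2) • nharmW (toZ w1) (toZ w2)

/-- The letter exchange `τ(x) = y`, `τ(y) = x`. -/
def τ : Letter → Letter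
  | Letter.x => Letter.y
  | Letter.y => Letter.x

/-- `δ(w) = 1` if `w` is the empty word, `0` otherwise. -/
def δ : List Letter → ℚ
  | [] => 1
  | _ :: _ => 0

/-- The shuffle product on words:
`1 ш w = w ш 1 = w` and `u₁w₁ ш u₂w₂ = u₁(w₁ ш u₂w₂) + u₂(u₁w₁ ш w₂)`. -/
noncomputable def shW : List Letter → List Letter → H
  | [], w => word (FreeMonoid.ofList w)
  | u :: w, [] => word (FreeMonoid.ofList (u :: w))
  | u1 :: w1, u2 :: w2 =>
      word (FreeMonoid.of u1) * shW w1 (u2 :: w2) +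
        word (FreeMonoid.of u2) * shW (u1 :: w1) w2
termination_by w1 w2 => w1.length + w2.length
decreasing_by all_goals simp [Nat.lt_succ_iff]

/-- The n-shuffle product on words: `1 ш̄ w = w ш̄ 1 = w` and
`u₁w₁ ш̄ u₂w₂ = u₁(w₁ ш̄ u₂w₂) + u₂(u₁w₁ ш̄ w₂) − δ(w₁)τ(u₁)u₂w₂ − δ(w₂)τ(u₂)u₁w₁`. -/
noncomputable def nshW : List Letter → List Letter → H
  | [], w => word (FreeMonoid.ofList w)
  | u :: w, [] => word (FreeMonoid.ofList (u :: w))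
  | u1 :: w1, u2 :: w2 =>
      word (FreeMonoid.of u1) * nshW w1 (u2 :: w2) +
        word (FreeMonoid.of u2) * nshW (u1 :: w1) w2 -
        δ w1 • word (FreeMonoid.ofList (τ u1 :: u2 :: w2)) -
        δ w2 • word (FreeMonoid.ofList (τ u2 :: u1 :: w1))
termination_by w1 w2 => w1.length + w2.length
decreasing_by all_goals simp [Nat.lt_succ_iff]

/-- The shuffle product `ш` on `H`, extended ℚ-bilinearly. -/
noncomputable def sh (a b : H) : H :=
  Finsupp.sum a.coeff fun w1 c1 =>
    Finsupp.sum b.coeff fun w2 c2 =>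
      (c1 * c2) • shW (FreeMonoid.toList w1) (FreeMonoid.toList w2)

/-- The n-shuffle product `ш̄` on `H`, extended ℚ-bilinearly. -/
noncomputable def nsh (a b : H) : H :=
  Finsupp.sum a.coeff fun w1 c1 =>
    Finsupp.sum b.coeff fun w2 c2 =>
      (c1 * c2) • nshW (FreeMonoid.toList w1) (FreeMonoid.toList w2)

/-- `S₁`: the ℚ-algebra endomorphism of `H` with `S₁(x) = x`, `S₁(y) = x + y`. -/
noncomputable def S1 : H →ₐ[ℚ] H :=
  MonoidAlgebra.lift ℚ H (FreeMonoid Letter)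
    (FreeMonoid.lift fun u => match u with
      | Letter.x => X
      | Letter.y => X + Y)

/-- `S₂`: the ℚ-algebra endomorphism of `H` with `S₂(x) = x`, `S₂(y) = y − x`. -/
noncomputable def S2 : H →ₐ[ℚ] H :=
  MonoidAlgebra.lift ℚ H (FreeMonoid Letter)
    (FreeMonoid.lift fun u => match u with
      | Letter.x => X
      | Letter.y => Y - X)

/-- `S` on a word: `S(1) = 1` and `S(Fy) = S₁(F)y`. -/
noncomputable def SW (w : FreeMonoid Letter) : H :=
  match (FreeMonoid.toList w).getLast? with
  | some Letter.y =>
      S1 (word (FreeMonoid.ofList (FreeMonoid.toList w).dropLast)) * Y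
  | _ => word w

/-- The ℚ-linear map `S : H¹ → H¹` with `S(1) = 1`, `S(Fy) = S₁(F)y`. -/
noncomputable def S (a : H) : H := Finsupp.sum a.coeff fun w c => c • SW w

/-- `S̃` on a word: `S̃(1) = 1` and `S̃(Fy) = S₂(F)y`. -/
noncomputable def StW (w : FreeMonoid Letter) : H :=
  match (FreeMonoid.toList w).getLast? with
  | some Letter.y =>
      S2 (word (FreeMonoid.ofList (FreeMonoid.toList w).dropLast)) * Y
  | _ => word w

/-- The ℚ-linear map `S̃ : H¹ → H¹` with `S̃(1) = 1`, `S̃(Fy) = S₂(F)y`. -/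
noncomputable def St (a : H) : H := Finsupp.sum a.coeff fun w c => c • StW w

/-- The multiple zeta value `ζ(k₁,…,kₙ)`: the sum over strictly decreasing
tuples `m₁ > m₂ > ⋯ > mₙ > 0` of `1/(m₁^{k₁}⋯mₙ^{kₙ})`. -/
noncomputable def mzeta (ks : List ℕ) : ℝ :=
  ∑' m : {f : Fin ks.length → ℕ // (∀ i, 0 < f i) ∧
      ∀ i j : Fin ks.length, i < j → f j < f i},
    ∏ i : Fin ks.length, ((m.1 i : ℝ) ^ ks.get i)⁻¹

/-- The non-strict multiple zeta value `ζ̄(k₁,…,kₙ)`: the sum over weakly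
decreasing tuples `m₁ ≥ m₂ ≥ ⋯ ≥ mₙ > 0` of `1/(m₁^{k₁}⋯mₙ^{kₙ})`. -/
noncomputable def nmzeta (ks : List ℕ) : ℝ :=
  ∑' m : {f : Fin ks.length → ℕ // (∀ i, 0 < f i) ∧
      ∀ i j : Fin ks.length, i ≤ j → f j ≤ f i},
    ∏ i : Fin ks.length, ((m.1 i : ℝ) ^ ks.get i)⁻¹

/-- The evaluation map `Z : H⁰ → ℝ`, `Z(1) = 1`,
`Z(z_{k₁}⋯z_{kₙ}) = ζ(k₁,…,kₙ)` (extended ℚ-linearly to `H`). -/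
noncomputable def Z (a : H) : ℝ := Finsupp.sum a.coeff fun w c => (c : ℝ) * mzeta (toZ w)

/-- The n-evaluation map `Z̄ : H⁰ → ℝ`, `Z̄(1) = 1`,
`Z̄(z_{k₁}⋯z_{kₙ}) = ζ̄(k₁,…,kₙ)` (extended ℚ-linearly to `H`). -/
noncomputable def Zbar (a : H) : ℝ := Finsupp.sum a.coeff fun w c => (c : ℝ) * nmzeta (toZ w)

/-- `i`-fold n-harmonic power: `a^{*̄ 0} = 1`, `a^{*̄ (i+1)} = a *̄ a^{*̄ i}`. -/
noncomputable def nharmPow : ℕ → H → H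
  | 0, _ => 1
  | i + 1, a => nharm a (nharmPow i a)

/-- `i`-fold n-shuffle power: `a^{ш̄ 0} = 1`, `a^{ш̄ (i+1)} = a ш̄ a^{ш̄ i}`. -/
noncomputable def nshPow : ℕ → H → H
  | 0, _ => 1
  | i + 1, a => nsh a (nshPow i a)

end H

open H

namespace H

theorem word_mul_aux (a b : FreeMonoid Letter) : word (a * b) = word a * word b := by
  simp [word, MonoidAlgebra.single_mul_single]

theorem zListW_cons_aux (k : ℕ) (ks : List ℕ) :
    word (zListW (k :: ks)) = z k * word (zListW ks) := by
  rw [z, ← word_mul_aux]; rfl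

theorem zListW_nil_aux : word (zListW []) = 1 := rfl

theorem toZAux_aux (m n : ℕ) (r : List Letter) :
    toZAux (List.replicate m Letter.x ++ (Letter.y :: r)) n = (n + m + 1) :: toZAux r 0 := by
  induction m generalizing n with
  | zero => simp [toZAux]
  | succ m ih =>
    rw [List.replicate_succ, List.cons_append, toZAux, ih]
    congr 1; omega

theorem toZ_zListW_aux (ks : List ℕ) (h : ∀ a ∈ ks, 0 < a) : toZ (zListW ks) = ks := by
  induction ks with
  | nil => rfl
  | cons k ks ih =>
    have h1 : toZ (zListW (k :: ks)) = (0 + (k - 1) + 1) :: toZ (zListW ks) := by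
      rw [toZ, toZ, ← toZAux_aux]
      simp [zListW]
    rw [h1, ih (fun a ha => h a (by simp [ha]))]
    have := h k (by simp)
    congr 1; omega

theorem word_pow_x_aux (m : ℕ) :
    word (FreeMonoid.ofList (List.replicate m Letter.x)) = X ^ m := by
  induction m with
  | zero => rfl
  | succ m ih =>
    rw [pow_succ', ← ih, X, ← word_mul_aux]; rfl

theorem z_eq_aux (k : ℕ) : z k = X ^ (k - 1) * Y := by
  rw [← word_pow_x_aux, Y, ← word_mul_aux]; rfl

theorem Xpow_z_aux (m k : ℕ) (hk : 0 < k) : X ^ m * z k = z (m + k) := by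
  rw [z_eq_aux, z_eq_aux, ← mul_assoc, ← pow_add]
  congr 2; omega

theorem S1_X_aux : S1 X = X := by
  simp [S1, X, word]

theorem S1_Y_aux : S1 Y = X + Y := by
  simp [S1, Y, word]

theorem S1_z_aux (k : ℕ) (hk : 0 < k) : S1 (z k) = X ^ k + z k := by
  rw [z_eq_aux, map_mul, map_pow, S1_X_aux, S1_Y_aux, mul_add, ← pow_succ]
  congr 2; omega

theorem S_z_aux (k : ℕ) : S (z k) = z k := by
  have h : SW (zW k) = z k := by
    rw [z_eq_aux, SW, zW]
    simp [word_pow_x_aux, S1_X_aux]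
  rw [S, z, word, MonoidAlgebra.coeff_single, Finsupp.sum_single_index] <;> simp
  exact h

theorem harm_word_aux (a b : FreeMonoid Letter) :
    harm (word a) (word b) = harmW (toZ a) (toZ b) := by
  rw [harm, word, word, MonoidAlgebra.coeff_single, MonoidAlgebra.coeff_single,
    Finsupp.sum_single_index, Finsupp.sum_single_index] <;> simp

theorem harm_add_left_aux (a b c : H) : harm (a + b) c = harm a c + harm b c := by
  rw [harm, MonoidAlgebra.coeff_add, Finsupp.sum_add_index']
  · rfl
  · simp
  · intro w c1 c2
    simp [add_mul, add_smul, Finsupp.sum_add]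

theorem harm_add_right_aux (a b c : H) : harm a (b + c) = harm a b + harm a c := by
  simp only [harm]
  rw [← Finsupp.sum_add]
  congr 1; ext1 w; ext1 c1
  rw [MonoidAlgebra.coeff_add, Finsupp.sum_add_index']
  · simp
  · intro w c1 c2
    simp [mul_add, add_smul]

theorem S1_zListW_aux (q b : ℕ) (v : List ℕ) (hq : 0 < q) (hb : 0 < b) :
    S1 (z q) * word (zListW (b :: v)) =
      word (zListW ((q + b) :: v)) + word (zListW (q :: b :: v)) := by
  rw [S1_z_aux q hq, add_mul, zListW_cons_aux b, ← mul_assoc, Xpow_z_aux q b hb]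
  simp only [zListW_cons_aux]

theorem harm_zListW_aux (u v : List ℕ) (hu : ∀ a ∈ u, 0 < a) (hv : ∀ a ∈ v, 0 < a) :
    harm (word (zListW u)) (word (zListW v)) = harmW u v := by
  rw [harm_word_aux, toZ_zListW_aux u hu, toZ_zListW_aux v hv]

theorem Xpow_z_mul_aux (m k : ℕ) (hk : 0 < k) (t : H) : X ^ m * (z k * t) = z (m + k) * t := by
  rw [← mul_assoc, Xpow_z_aux m k hk]

end H

/-- Lemma 2.5: for nonempty words `w = z_{k₁}⋯z_{kₙ}`, `w1`, `w2` of `H¹` and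
positive integers `p`, `q`:
`S(z_p) * S₁(z_q)w = S₁(z_p z_q)w + S₁(z_q)(S(z_p) * w) − S₁(z_{p+q})w` and
`S₁(z_p)w₁ * S₁(z_q)w₂ = S₁(z_p)(w₁ * S₁(z_q)w₂) + S₁(z_q)(S₁(z_p)w₁ * w₂)
  − S₁(z_{p+q})(w₁ * w₂)`. -/
theorem lemma_2_5 (p q : ℕ) (hp : 0 < p) (hq : 0 < q)
    (w w1 w2 : List ℕ) (hw : w ≠ []) (hw1 : w1 ≠ []) (hw2 : w2 ≠ [])
    (hwpos : ∀ a ∈ w, 0 < a) (hw1pos : ∀ a ∈ w1, 0 < a)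
    (hw2pos : ∀ a ∈ w2, 0 < a) :
    harm (S (z p)) (S1 (z q) * word (zListW w)) =
      S1 (z p * z q) * word (zListW w) +
        S1 (z q) * harm (S (z p)) (word (zListW w)) -
        S1 (z (p + q)) * word (zListW w) ∧
    harm (S1 (z p) * word (zListW w1)) (S1 (z q) * word (zListW w2)) =
      S1 (z p) * harm (word (zListW w1)) (S1 (z q) * word (zListW w2)) +
        S1 (z q) * harm (S1 (z p) * word (zListW w1)) (word (zListW w2)) -
        S1 (z (p + q)) * harm (word (zListW w1)) (word (zListW w2)) := by
  constructor
  · obtain ⟨b, v, rfl⟩ := List.exists_cons_of_ne_nil hw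
    have hb : 0 < b := hwpos b (by simp)
    have hv : ∀ a ∈ v, 0 < a := fun a ha => hwpos a (by simp [ha])
    have hz : z p = word (zListW [p]) := by rw [zListW_cons_aux, zListW_nil_aux, mul_one]
    rw [S_z_aux, S1_zListW_aux q b v hq hb, harm_add_right_aux, map_mul]
    conv_lhs => rw [hz]
    conv_rhs => enter [1, 2]; rw [hz]
    rw [harm_zListW_aux, harm_zListW_aux, harm_zListW_aux]
    · rw [S1_z_aux p hp, S1_z_aux q hq, S1_z_aux (p + q) (by omega)]
      simp only [harmW, zListW_cons_aux, zListW_nil_aux, mul_add, add_mul, mul_assoc, mul_one]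
      have e : ∀ t : H, X ^ p * (X ^ q * t) = X ^ (p + q) * t := fun t => by
        rw [← mul_assoc, pow_add]
      simp only [e]
      simp (disch := omega) only [Xpow_z_mul_aux]
      rw [show p + (q + b) = p + q + b by omega, show q + (p + b) = p + q + b by omega,
        show q + p = p + q by omega]
      abel
    all_goals grind
  · obtain ⟨a, u, rfl⟩ := List.exists_cons_of_ne_nil hw1
    obtain ⟨b, v, rfl⟩ := List.exists_cons_of_ne_nil hw2
    have ha : 0 < a := hw1pos a (by simp)
    have hb : 0 < b := hw2pos b (by simp)
    rw [S1_zListW_aux q b v hq hb, S1_zListW_aux p a u hp ha]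
    simp only [harm_add_left_aux, harm_add_right_aux]
    have hpa : ∀ c ∈ (p + a) :: u, 0 < c := by grind
    have hqb : ∀ c ∈ (q + b) :: v, 0 < c := by grind
    have hpau : ∀ c ∈ p :: a :: u, 0 < c := by grind
    have hqbv : ∀ c ∈ q :: b :: v, 0 < c := by grind
    rw [harm_zListW_aux _ _ hpa hqb, harm_zListW_aux _ _ hpa hqbv,
      harm_zListW_aux _ _ hpau hqb, harm_zListW_aux _ _ hpau hqbv,
      harm_zListW_aux _ _ hw1pos hqb, harm_zListW_aux _ _ hw1pos hqbv,
      harm_zListW_aux _ _ hpa hw2pos, harm_zListW_aux _ _ hpau hw2pos,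
      harm_zListW_aux _ _ hw1pos hw2pos]
    have e : ∀ k w1 l w2, harmW (k :: w1) (l :: w2) =
      z k * harmW w1 (l :: w2) + z l * harmW (k :: w1) w2 + z (k + l) * harmW w1 w2 :=
      fun k w1 l w2 => by rw [harmW]
    rw [S1_z_aux p hp, S1_z_aux q hq, S1_z_aux (p + q) (by omega)]
    simp only [add_mul]
    rw [e (p + a) u (q + b) v, e (p + a) u q (b :: v), e p (a :: u) (q + b) v,
      e p (a :: u) q (b :: v)]
    have e1 := e a u (q + b) v
    have e2 := e a u q (b :: v)
    have e3 := e (p + a) u b v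
    have e4 := e p (a :: u) b v
    have e5 := e a u b v
    have f1 : X ^ p * (harmW (a :: u) ((q + b) :: v) + harmW (a :: u) (q :: b :: v)) =
      z (p + a) * harmW u ((q + b) :: v) + z (p + q + b) * harmW (a :: u) v
      + z (p + q + a + b) * harmW u v + z (p + a) * harmW u (q :: b :: v)
      + z (p + q) * harmW (a :: u) (b :: v) + z (p + q + a) * harmW u (b :: v) := by
      rw [e1, e2]
      simp only [mul_add]
      simp (disch := omega) only [Xpow_z_mul_aux]
      rw [show p + (q + b) = p + q + b by omega, show p + (a + q) = p + q + a by omega,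
        show p + (a + (q + b)) = p + q + a + b by omega]
      abel
    have f2 : X ^ q * (harmW ((p + a) :: u) (b :: v) + harmW (p :: a :: u) (b :: v)) =
      z (p + q + a) * harmW u (b :: v) + z (q + b) * harmW ((p + a) :: u) v
      + z (p + q + a + b) * harmW u v + z (p + q) * harmW (a :: u) (b :: v)
      + z (q + b) * harmW (p :: a :: u) v + z (p + q + b) * harmW (a :: u) v := by
      rw [e3, e4]
      simp only [mul_add]
      simp (disch := omega) only [Xpow_z_mul_aux]
      rw [show q + (p + a) = p + q + a by omega, show q + p = p + q by omega,
        show q + (p + a + b) = p + q + a + b by omega,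
        show q + (p + b) = p + q + b by omega]
      abel
    have f3 : X ^ (p + q) * harmW (a :: u) (b :: v) =
      z (p + q + a) * harmW u (b :: v) + z (p + q + b) * harmW (a :: u) v
      + z (p + q + a + b) * harmW u v := by
      rw [e5]
      simp only [mul_add]
      simp (disch := omega) only [Xpow_z_mul_aux]
      rw [show p + q + (a + b) = p + q + a + b by omega]
    have hsplit : ∀ s t r : H, s * (t + r) = s * t + s * r := mul_add
    rw [add_comm (harmW (a :: u) ((q + b) :: v)) (harmW (a :: u) (q :: b :: v))] at *
    first
      | rw [f1, f2, f3]
      | (rw [add_comm (harmW (p :: a :: u) (b :: v))]; rw [f1, f2, f3])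
    rw [show p + a + (q + b) = p + q + a + b by omega, show p + a + q = p + q + a by omega,
      show p + (q + b) = p + q + b by omega]
    simp only [mul_add]
    abel
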